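/- Let ε ≥ 2^{−2^{n−1}}. Then the optimistic ε-feasible bilevel optimal value sup { F(x, y) : x in the box [x̲₁, x̄₁] × [x̲₂, x̄₂], y a maximizer of f(x, ·) over Ω_ε(x) } equals x̄₁ + x̄₂, and this value is attained at the leader's decision x* = (x̄₁, x̄₂) together with a maximizer y of f(x*, ·) over Ω_ε(x*) satisfying y_{n+1} = 0 and y_{n+2} = x̄₂. -/

import Mathlib

/-!
If `ε ≥ 2^(-2^(n-1))`, repeated squaring may end at `y_n = 0`: starting from `y₁ = 1/2`, taking
`y_{i+1} = y_i²` gives `y_{n-1}² = 2^(-2^(n-1)) ≤ ε`, so the last quadratic constraint still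
holds up to `ε` with `y_n = 0`. Since `y₁ ≤ 1/2`, `y_n ≥ 0` and `x₁ + x₂ - y_{n+1} - y_{n+2} ≥ 0`
throughout `Ω_ε(x)`, the follower's objective never exceeds `1/2`, and the value `1/2` is reached
at this point whatever `y_{n+1}` and `y_{n+2}` are. The choice `y_{n+1} = 0`, `y_{n+2} = x₂` then
gives the leader `x₁ + x₂`, which bounds the leader's objective on all of `Ω_ε(x)`; it is largest
at the upper corner of the box.
-/

/-- The set `Ω_ε(x)` of ε-feasible points: all linear constraints of `Ω(x)`
hold exactly and each quadratic constraint may be violated by at most `ε`. -/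
def OmegaEps (n : ℕ) (x1 x2 ε : ℝ) : Set (Fin (n + 2) → ℝ) :=
  {y | y ⟨0, by omega⟩ + y ⟨n - 1, by omega⟩ = 1 / 2 ∧
    (∀ i : ℕ, ∀ _h1 : 1 ≤ i, ∀ _h2 : i ≤ n - 1,
      (y ⟨i - 1, by omega⟩) ^ 2 ≤ y ⟨i, by omega⟩ + ε) ∧
    (∀ i : ℕ, ∀ _h1 : 1 ≤ i, ∀ _h2 : i ≤ n, 0 ≤ y ⟨i - 1, by omega⟩) ∧
    0 ≤ y ⟨n, by omega⟩ ∧ y ⟨n, by omega⟩ ≤ x1 ∧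
    -x2 ≤ y ⟨n + 1, by omega⟩ ∧ y ⟨n + 1, by omega⟩ ≤ x2}

/-- The follower's objective `f(x, y) = y₁ − yₙ (x₁ + x₂ − y_{n+1} − y_{n+2})`. -/
noncomputable def follower (n : ℕ) (x1 x2 : ℝ) (y : Fin (n + 2) → ℝ) : ℝ :=
  y ⟨0, by omega⟩ -
    y ⟨n - 1, by omega⟩ * (x1 + x2 - y ⟨n, by omega⟩ - y ⟨n + 1, by omega⟩)

/-- The set of maximizers of the follower's objective over `Ω_ε(x)`. -/
def SEps (n : ℕ) (x1 x2 ε : ℝ) : Set (Fin (n + 2) → ℝ) :=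
  {y | y ∈ OmegaEps n x1 x2 ε ∧
    ∀ y' ∈ OmegaEps n x1 x2 ε, follower n x1 x2 y' ≤ follower n x1 x2 y}

/-- The leader's objective `F(x, y) = x₁ − 2 y_{n+1} + y_{n+2}`. -/
noncomputable def leader (n : ℕ) (x1 : ℝ) (y : Fin (n + 2) → ℝ) : ℝ :=
  x1 - 2 * y ⟨n, by omega⟩ + y ⟨n + 1, by omega⟩

/-- The follower's best response most favourable to the leader, with 0-based indices:
`y_k = 2^(-2^k)` for `k < n - 1`, then `0` at `n - 1` and `n`, and `x₂` at `n + 1`. -/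
noncomputable def squaringPoint (n : ℕ) (x2 : ℝ) : Fin (n + 2) → ℝ := fun k =>
  if (k : ℕ) < n - 1 then (1 / 2) ^ 2 ^ (k : ℕ) else if (k : ℕ) = n + 1 then x2 else 0

lemma squaringPoint_mem_OmegaEps {n : ℕ} (hn : 2 ≤ n) {x1 x2 ε : ℝ} (hx1 : 0 ≤ x1) (hx2 : 0 ≤ x2)
    (hε : 1 / 2 ^ 2 ^ (n - 1) ≤ ε) : squaringPoint n x2 ∈ OmegaEps n x1 x2 ε := by
  have hε0 : 0 ≤ ε := le_trans (by positivity) hε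
  refine ⟨?_, ?_, ?_, ?_, ?_, ?_, ?_⟩
  · simp [squaringPoint, show 0 < n - 1 by omega, show n - 1 ≠ n + 1 by omega]
  · intro i h1 h2
    have hsq : (((1 : ℝ) / 2) ^ 2 ^ (i - 1)) ^ 2 = (1 / 2) ^ 2 ^ i := by
      rw [← pow_mul, ← pow_succ, Nat.sub_add_cancel h1]
    simp only [squaringPoint, if_pos (show i - 1 < n - 1 by omega), hsq]
    rcases h2.lt_or_eq with h | rfl
    · rw [if_pos h]
      linarith
    · rw [if_neg (lt_irrefl _), if_neg (by omega), zero_add, one_div_pow]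
      exact hε
  · intro i _ _
    simp only [squaringPoint]
    split_ifs <;> positivity
  all_goals simp [squaringPoint, show ¬ n < n - 1 by omega, show ¬ n + 1 < n - 1 by omega]
  · exact hx1
  · linarith

lemma follower_le_half {n : ℕ} (hn : 2 ≤ n) {x1 x2 ε : ℝ} {y : Fin (n + 2) → ℝ}
    (hy : y ∈ OmegaEps n x1 x2 ε) : follower n x1 x2 y ≤ 1 / 2 := by
  obtain ⟨hsum, -, hnn, -, h1, -, h2⟩ := hy
  have hlast : 0 ≤ y ⟨n - 1, by omega⟩ := hnn n (by omega) le_rfl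
  have hprod := mul_nonneg hlast
    (show 0 ≤ x1 + x2 - y ⟨n, by omega⟩ - y ⟨n + 1, by omega⟩ by linarith)
  unfold follower
  linarith

lemma follower_squaringPoint {n : ℕ} (hn : 2 ≤ n) (x1 x2 : ℝ) :
    follower n x1 x2 (squaringPoint n x2) = 1 / 2 := by
  simp [follower, squaringPoint, show 0 < n - 1 by omega, show n - 1 ≠ n + 1 by omega]

lemma squaringPoint_mem_SEps {n : ℕ} (hn : 2 ≤ n) {x1 x2 ε : ℝ} (hx1 : 0 ≤ x1) (hx2 : 0 ≤ x2)
    (hε : 1 / 2 ^ 2 ^ (n - 1) ≤ ε) : squaringPoint n x2 ∈ SEps n x1 x2 ε :=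
  ⟨squaringPoint_mem_OmegaEps hn hx1 hx2 hε, fun _ hy' =>
    (follower_le_half hn hy').trans_eq (follower_squaringPoint hn x1 x2).symm⟩

/-- Let `ε ≥ 2^(−2^(n−1))`. The optimistic ε-feasible bilevel optimal value
`sup { F(x, y) : x in the box, y a maximizer of f(x, ·) over Ω_ε(x) }`
equals `x̄₁ + x̄₂`, attained at `x* = (x̄₁, x̄₂)` together with a maximizer `y`
of `f(x*, ·)` over `Ω_ε(x*)` with `y_{n+1} = 0` and `y_{n+2} = x̄₂`. -/
theorem stmt12 (n : ℕ) (hn : 2 ≤ n)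
    (xl1 xl2 xu1 xu2 : ℝ) (hl1 : 1 ≤ xl1) (hl2 : 1 ≤ xl2)
    (hu1 : xl1 < xu1) (hu2 : xl2 < xu2)
    (ε : ℝ) (hε : 1 / 2 ^ 2 ^ (n - 1) ≤ ε) :
    IsGreatest
      {v : ℝ | ∃ x1 x2 : ℝ, ∃ y : Fin (n + 2) → ℝ,
        x1 ∈ Set.Icc xl1 xu1 ∧ x2 ∈ Set.Icc xl2 xu2 ∧
        y ∈ SEps n x1 x2 ε ∧ v = leader n x1 y}
      (xu1 + xu2) ∧
    ∃ y ∈ SEps n xu1 xu2 ε,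
      y ⟨n, by omega⟩ = 0 ∧ y ⟨n + 1, by omega⟩ = xu2 ∧
      leader n xu1 y = xu1 + xu2 := by
  have hmem : squaringPoint n xu2 ∈ SEps n xu1 xu2 ε :=
    squaringPoint_mem_SEps hn (by linarith) (by linarith) hε
  have hn0 : squaringPoint n xu2 ⟨n, by omega⟩ = 0 := by
    simp [squaringPoint, show ¬ n < n - 1 by omega]
  have hn1 : squaringPoint n xu2 ⟨n + 1, by omega⟩ = xu2 := by
    simp [squaringPoint, show ¬ n + 1 < n - 1 by omega]
  have hval : leader n xu1 (squaringPoint n xu2) = xu1 + xu2 := by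
    simp [leader, hn0, hn1]
  refine ⟨⟨⟨xu1, xu2, _, ⟨hu1.le, le_rfl⟩, ⟨hu2.le, le_rfl⟩, hmem, hval.symm⟩, ?_⟩,
    _, hmem, hn0, hn1, hval⟩
  rintro _ ⟨x1, x2, y, hx1, hx2, ⟨⟨-, -, -, h0, -, -, h2⟩, -⟩, rfl⟩
  unfold leader
  linarith [hx1.2, hx2.2]
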